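/- arXiv:2204.05540 — 2 statements merged into one kernel-verified Lean document; each statement's English description precedes it below -/
import Mathlib

section
/- The characteristic polynomial of the matrix M_q(n) equals ∏_{k=0}^{n} (x − ((n−k)_q − (k)_q))^{[n choose k]_q}; equivalently, the eigenvalues of M_q(n) are (n−k)_q − (k)_q with multiplicity [n choose k]_q, for k = 0, 1, …, n. -/
/-- The q-integer `(m)_q = 1 + q + ⋯ + q^(m-1)`, with `(0)_q = 0`. -/
def qInt (q m : ℕ) : ℕ := ∑ i ∈ Finset.range m, q ^ i

/-- The q-analog of the adjacency matrix of the n-cube: rows and columns indexed by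
subspaces of `F^n`; entry `(X, Y)` is `1` if `Y ⊆ X` with `dim Y = dim X - 1`,
`q^k` if `X ⊆ Y` with `dim X = k`, `dim Y = k + 1`, and `0` otherwise. -/
noncomputable def Mq (F : Type) [Field F] [Fintype F] (n : ℕ) :
    Matrix (Submodule F (Fin n → F)) (Submodule F (Fin n → F)) ℂ :=
  open Classical in
  fun X Y =>
    if Y ≤ X ∧ Module.finrank F Y + 1 = Module.finrank F X then 1
    else if X ≤ Y ∧ Module.finrank F Y = Module.finrank F X + 1 then
      (Fintype.card F : ℂ) ^ (Module.finrank F X)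
    else 0

/-- The Gaussian binomial coefficient `[n choose k]_q`, defined as the number of
`k`-dimensional subspaces of `F^n`, where `q` is the cardinality of `F`. -/
noncomputable def gaussBinom (F : Type) [Field F] [Fintype F] (n k : ℕ) : ℕ :=
  Nat.card {X : Submodule F (Fin n → F) // Module.finrank F X = k}

noncomputable instance (F : Type) [Field F] [Fintype F] (n : ℕ) :
    Fintype (Submodule F (Fin n → F)) := Fintype.ofFinite _

/-!
Conjugate by the zeta matrix of the lattice of subspaces, which is unitriangular: the column of `Z`
is the indicator function of the subspaces of `Z`. Its image under `M_q(n)` has at `X` the number of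
hyperplanes of `X` inside `Z` plus `q ^ dim X` times the number of upper covers of `X` inside `Z`.
If `X ≤ Z` this is `(dim X)_q + q ^ dim X * (dim Z - dim X)_q = (dim Z)_q`. If not, the second
number vanishes and, by modularity, the first is the number of upper covers of `Z` containing
`X`. As every one of the `(n - dim Z)_q` upper covers of `Z` contains each `X ≤ Z`, the image of
the column of `Z` is `(dim Z)_q - (n - dim Z)_q` times itself plus the columns of the upper
covers of `Z`. So `M_q(n)` is similar to a triangular matrix, whose diagonal is rearranged by the
duality `k ↔ n - k`.
-/

open Module

theorem qInt_add (q a b : ℕ) : qInt q (a + b) = qInt q a + q ^ a * qInt q b := by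
  simp only [qInt, Finset.sum_range_add, pow_add, Finset.mul_sum]

section Lattice

variable {α : Type*}

theorem covBy_and_le_iff [SemilatticeInf α] {x z : α} (h : ¬ x ≤ z) (y : α) :
    y ⋖ x ∧ y ≤ z ↔ y = x ⊓ z ∧ x ⊓ z ⋖ x := by
  constructor
  · rintro ⟨hyx, hyz⟩
    have hy : x ⊓ z = y :=
      (hyx.eq_or_eq (le_inf hyx.le hyz) inf_le_left).resolve_right (h ∘ inf_eq_left.1)
    exact ⟨hy.symm, hy ▸ hyx⟩
  · rintro ⟨rfl, hx⟩
    exact ⟨hx, inf_le_right⟩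

theorem le_and_covBy_iff [SemilatticeSup α] {x z : α} (h : ¬ x ≤ z) (y : α) :
    x ≤ y ∧ z ⋖ y ↔ y = x ⊔ z ∧ z ⋖ x ⊔ z := by
  constructor
  · rintro ⟨hxy, hzy⟩
    have hy : x ⊔ z = y :=
      (hzy.eq_or_eq le_sup_right (sup_le hxy hzy.le)).resolve_left (h ∘ sup_eq_right.1)
    exact ⟨hy.symm, hy ▸ hzy⟩
  · rintro ⟨rfl, hz⟩
    exact ⟨le_sup_left, hz⟩

theorem natCard_covBy_and_le_eq_natCard_le_and_covBy [Lattice α] [IsModularLattice α] {x z : α}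
    (h : ¬ x ≤ z) : Nat.card {y // y ⋖ x ∧ y ≤ z} = Nat.card {y // x ≤ y ∧ z ⋖ y} := by
  have hcov : x ⊓ z ⋖ x ↔ z ⋖ x ⊔ z :=
    ⟨covBy_sup_of_inf_covBy_left, inf_covBy_of_covBy_sup_right⟩
  simp only [covBy_and_le_iff h, le_and_covBy_iff h, ← hcov]
  by_cases hx : x ⊓ z ⋖ x <;> simp [hx]

end Lattice

section Matrices

variable {α R : Type*}

open Classical in
/-- The 0-1 matrix of a binary relation; for `· ≤ ·` this is the zeta matrix of an order, and
for `· ⋖ ·` the adjacency matrix of its Hasse diagram, directed upwards. -/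
noncomputable def relMatrix (R : Type*) [Zero R] [One R] (r : α → α → Prop) : Matrix α α R :=
  Matrix.of fun x y => if r x y then 1 else 0

theorem relMatrix_mul_relMatrix_apply [Fintype α] [NonAssocSemiring R] (r s : α → α → Prop)
    (x z : α) :
    (relMatrix R r * relMatrix R s) x z = Nat.card {y // r x y ∧ s y z} := by
  classical
  simp only [Matrix.mul_apply, relMatrix, Matrix.of_apply, ite_zero_mul_ite_zero, mul_one,
    Finset.sum_boole, Nat.card_eq_fintype_card, Fintype.card_subtype]

variable [Fintype α] [DecidableEq α] [CommRing R]

theorem det_eq_prod_diag_of_forall_not_le [PartialOrder α] (A : Matrix α α R)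
    (h : ∀ x y, ¬ x ≤ y → A x y = 0) : A.det = ∏ x, A x x :=
  let L : LinearOrder α := (inferInstance : LinearOrder (LinearExtension α))
  @Matrix.det_of_isUpperTriangular α R A _ _ _ L fun x y hyx =>
    h x y fun hxy => (toLinearExtension.monotone hxy).not_gt hyx

theorem det_relMatrix_le [PartialOrder α] : (relMatrix R (α := α) (· ≤ ·)).det = 1 := by
  rw [det_eq_prod_diag_of_forall_not_le (relMatrix R _) fun x y hxy => if_neg hxy]
  exact Finset.prod_eq_one fun x _ => if_pos le_rfl

open Polynomial in
theorem charpoly_eq_prod_of_forall_not_le [PartialOrder α] (A : Matrix α α R)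
    (h : ∀ x y, ¬ x ≤ y → A x y = 0) : A.charpoly = ∏ x, (X - C (A x x)) := by
  rw [Matrix.charpoly, det_eq_prod_diag_of_forall_not_le]
  · simp only [Matrix.charmatrix_apply_eq]
  · intro x y hxy
    rw [Matrix.charmatrix_apply_ne _ _ _ fun he => hxy he.le, h x y hxy, C_0, neg_zero]

open Polynomial in
theorem charpoly_diagonal_add_relMatrix_covBy [PartialOrder α] (d : α → R) :
    (Matrix.diagonal d + relMatrix R fun x y => y ⋖ x).charpoly = ∏ x, (X - C (d x)) := by
  rw [← Matrix.charpoly_transpose, charpoly_eq_prod_of_forall_not_le]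
  · simp [relMatrix]
  · intro x y hxy
    have hne : y ≠ x := fun he => hxy he.ge
    have hcov : ¬ x ⋖ y := fun hc => hxy hc.le
    simp [relMatrix, hne, hcov]

theorem charpoly_eq_of_mul_eq_mul {A T P : Matrix α α R} (hP : IsUnit P) (h : A * P = P * T) :
    A.charpoly = T.charpoly := by
  obtain ⟨u, rfl⟩ := hP
  rw [← Matrix.charpoly_units_conj u T, ← h, ← Matrix.coe_units_inv, Units.mul_inv_cancel_right]

end Matrices

section Counting

variable {F V : Type*} [Field F] [AddCommGroup V] [Module F V]

theorem covBy_iff_le_and_finrank_eq [FiniteDimensional F V] {W W' : Submodule F V} :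
    W ⋖ W' ↔ W ≤ W' ∧ finrank F W' = finrank F W + 1 := by
  constructor
  · intro h
    obtain ⟨v, hv, hvW⟩ := SetLike.exists_of_lt h.lt
    have hle : W ⊔ Submodule.span F {v} ≤ W' :=
      sup_le h.le ((Submodule.span_singleton_le_iff_mem _ _).2 hv)
    have hne : W ⊔ Submodule.span F {v} ≠ W := fun he =>
      hvW (he ▸ Submodule.mem_sup_right (Submodule.mem_span_singleton_self v))
    have hW' : W ⊔ Submodule.span F {v} = W' :=
      (h.eq_or_eq le_sup_left hle).resolve_left hne
    exact ⟨h.le, hW' ▸ Submodule.finrank_sup_span_singleton hvW⟩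
  · rintro ⟨hle, hdim⟩
    refine ⟨hle.lt_of_ne fun h => ?_, fun U hWU hUW' => ?_⟩
    · rw [h] at hdim
      omega
    · have := Submodule.finrank_lt_finrank_of_lt hWU
      have := Submodule.finrank_lt_finrank_of_lt hUW'
      omega

variable (F V) in
theorem exists_orderIso_dual_finrank_add_finrank [FiniteDimensional F V] :
    ∃ e : Submodule F V ≃o (Submodule F V)ᵒᵈ,
      ∀ W : Submodule F V,
        finrank F W + finrank F (OrderDual.ofDual (e W) : Submodule F V) = finrank F V := by
  have f : Dual F V ≃ₗ[F] V := LinearEquiv.ofFinrankEq _ _ Subspace.dual_finrank_eq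
  refine ⟨Subspace.orderIsoFiniteDimensional.trans (Submodule.orderIsoMapComap f).dual,
    fun W => ?_⟩
  rw [← Subspace.finrank_add_finrank_dualAnnihilator_eq W,
    ← LinearEquiv.finrank_map_eq f W.dualAnnihilator]
  rfl

theorem prod_finrank_sub_finrank_eq_prod_pow [FiniteDimensional F V] [Fintype (Submodule F V)]
    {M : Type*} [CommMonoid M] (f : ℕ → M) :
    ∏ W : Submodule F V, f (finrank F V - finrank F W) =
      ∏ k ∈ Finset.range (finrank F V + 1),
        f k ^ Nat.card {W : Submodule F V // finrank F W = k} := by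
  classical
  obtain ⟨e, he⟩ := exists_orderIso_dual_finrank_add_finrank F V
  calc
    _ = ∏ W : Submodule F V, f (finrank F (OrderDual.ofDual (e W) : Submodule F V)) :=
      Finset.prod_congr rfl fun W _ => by rw [← he W, Nat.add_sub_cancel_left]
    _ = ∏ W : Submodule F V, f (finrank F W) :=
      (e.toEquiv.trans OrderDual.ofDual).prod_comp fun W : Submodule F V => f (finrank F W)
    _ = ∏ k ∈ Finset.range (finrank F V + 1),
          ∏ W ∈ Finset.univ.filter (fun W : Submodule F V => finrank F W = k), f (finrank F W) :=
      (Finset.prod_fiberwise_of_maps_to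
        (fun W _ => Finset.mem_range.2 (Nat.lt_succ_of_le W.finrank_le)) _).symm
    _ = _ := Finset.prod_congr rfl fun k _ => by
      rw [Nat.card_eq_fintype_card, Fintype.card_subtype]
      exact Finset.prod_eq_pow_card fun W hW => by rw [(Finset.mem_filter.1 hW).2]

variable [Finite F]

variable (F V) in
theorem natCard_isAtom_submodule :
    Nat.card {W : Submodule F V // IsAtom W} = qInt (Nat.card F) (finrank F V) := by
  simp only [Submodule.isAtom_iff_finrank_eq_one]
  rw [← Nat.card_congr (Projectivization.equivSubmodule F V)]
  exact Projectivization.card_of_finrank F V rfl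

variable (F V) in
theorem natCard_isCoatom_submodule [FiniteDimensional F V] :
    Nat.card {W : Submodule F V // IsCoatom W} = qInt (Nat.card F) (finrank F V) := by
  obtain ⟨e, -⟩ := exists_orderIso_dual_finrank_add_finrank F V
  rw [← natCard_isAtom_submodule F V]
  exact Nat.card_congr <| (e.toEquiv.trans OrderDual.ofDual).subtypeEquiv fun W => by
    rw [← e.isCoatom_iff, ← isCoatom_dual_iff_isAtom]
    rfl

theorem natCard_lowerCovers (W : Submodule F V) [FiniteDimensional F W] :
    Nat.card {U // U ⋖ W} = qInt (Nat.card F) (finrank F W) := by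
  rw [← natCard_isCoatom_submodule F W]
  exact (Nat.card_congr <| (W.mapIic.toEquiv.subtypeEquiv fun U =>
    (W.mapIic.isCoatom_iff U).symm.trans Set.Iic.isCoatom_iff).trans
      (Equiv.subtypeSubtypeEquivSubtype fun h => h.le)).symm

theorem natCard_upperCovers [FiniteDimensional F V] (W : Submodule F V) :
    Nat.card {U // W ⋖ U} = qInt (Nat.card F) (finrank F V - finrank F W) := by
  rw [← Submodule.finrank_quotient, ← natCard_isAtom_submodule F (V ⧸ W)]
  let e := W.comapMkQRelIso
  exact (Nat.card_congr <| (e.toEquiv.subtypeEquiv fun U =>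
    (e.isAtom_iff U).symm.trans Set.Ici.isAtom_iff).trans
      (Equiv.subtypeSubtypeEquivSubtype fun h => h.le)).symm

theorem natCard_upperCovers_le {W W' : Submodule F V} [FiniteDimensional F W'] (h : W ≤ W') :
    Nat.card {U // W ⋖ U ∧ U ≤ W'} = qInt (Nat.card F) (finrank F W' - finrank F W) := by
  have hmap : (W.submoduleOf W').map W'.subtype = W := by
    rw [Submodule.submoduleOf, Submodule.map_comap_subtype, inf_eq_right.2 h]
  have hcov (U : Submodule F W') : W.submoduleOf W' ⋖ U ↔ W ⋖ U.map W'.subtype := by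
    conv_rhs => rw [← hmap]
    exact ⟨Submodule.map_covBy_of_injective W'.injective_subtype,
      CovBy.of_image (Submodule.MapSubtype.orderEmbedding W')⟩
  rw [← (Submodule.submoduleOfEquivOfLe h).finrank_eq, ← natCard_upperCovers]
  simp only [hcov]
  exact (Nat.card_congr <|
    (W'.mapIic.toEquiv.subtypeEquiv (q := fun U : Set.Iic W' => W ⋖ U.1) fun _ => Iff.rfl).trans <|
      (Equiv.subtypeSubtypeEquivSubtypeInter (· ≤ W') (W ⋖ ·)).trans <|
        Equiv.subtypeEquivRight fun _ => and_comm).symm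

end Counting

section SubspaceMatrix

variable (R F V : Type*) [CommRing R] [Field F] [AddCommGroup V] [Module F V]

open Classical in
/-- The q-analogue of the adjacency matrix of the cube, for the subspaces of an arbitrary vector
space `V` and over an arbitrary ring of scalars `R`, with `dim Y = dim X - 1` and `Y ⊆ X` encoded
as the covering relation `Y ⋖ X`. -/
noncomputable def qAdjMatrix : Matrix (Submodule F V) (Submodule F V) R :=
  Matrix.of fun X Y => if Y ⋖ X then 1 else if X ⋖ Y then (Nat.card F : R) ^ finrank F X else 0

theorem qAdjMatrix_eq_add [Fintype (Submodule F V)] [DecidableEq (Submodule F V)] :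
    qAdjMatrix R F V = relMatrix R (fun X Y => Y ⋖ X) +
      Matrix.diagonal (fun X : Submodule F V => (Nat.card F : R) ^ finrank F X) *
        relMatrix R (· ⋖ ·) := by
  ext X Y
  rw [Matrix.add_apply, Matrix.diagonal_mul]
  by_cases hYX : Y ⋖ X
  · have hXY : ¬ X ⋖ Y := fun h => h.lt.not_gt hYX.lt
    simp [qAdjMatrix, relMatrix, hYX, hXY]
  · simp [qAdjMatrix, relMatrix, hYX]

variable [Finite F] [FiniteDimensional F V] [Fintype (Submodule F V)]
  [DecidableEq (Submodule F V)]

theorem qAdjMatrix_mul_relMatrix_le :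
    qAdjMatrix R F V * relMatrix R (· ≤ ·) = relMatrix R (· ≤ ·) *
      (Matrix.diagonal (fun Z : Submodule F V => (qInt (Nat.card F) (finrank F Z) : R) -
        qInt (Nat.card F) (finrank F V - finrank F Z)) + relMatrix R (fun Y Z => Z ⋖ Y)) := by
  ext X Z
  rw [qAdjMatrix_eq_add, add_mul, mul_add, mul_assoc, Matrix.add_apply, Matrix.add_apply,
    Matrix.diagonal_mul, Matrix.mul_diagonal]
  simp only [relMatrix_mul_relMatrix_apply]
  by_cases h : X ≤ Z
  · have hdown : Nat.card {Y // Y ⋖ X ∧ Y ≤ Z} = qInt (Nat.card F) (finrank F X) := by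
      simp_rw [and_iff_left_of_imp fun hY : _ ⋖ X => hY.le.trans h, natCard_lowerCovers]
    have hup : Nat.card {Y // X ≤ Y ∧ Z ⋖ Y} =
        qInt (Nat.card F) (finrank F V - finrank F Z) := by
      simp_rw [and_iff_right_of_imp fun hY : Z ⋖ _ => h.trans hY.le, natCard_upperCovers]
    have hsum := qInt_add (Nat.card F) (finrank F X) (finrank F Z - finrank F X)
    rw [Nat.add_sub_cancel' (Submodule.finrank_mono h)] at hsum
    rw [hdown, hup, natCard_upperCovers_le h, hsum, relMatrix, Matrix.of_apply, if_pos h]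
    push_cast
    ring
  · have hnone : IsEmpty {Y // X ⋖ Y ∧ Y ≤ Z} := ⟨fun Y => h (Y.2.1.le.trans Y.2.2)⟩
    rw [natCard_covBy_and_le_eq_natCard_le_and_covBy h,
      Nat.card_of_isEmpty (α := {Y // X ⋖ Y ∧ Y ≤ Z}), relMatrix, Matrix.of_apply, if_neg h]
    simp

open Polynomial in
theorem charpoly_Mq_general :
    (qAdjMatrix R F V).charpoly =
      ∏ k ∈ Finset.range (finrank F V + 1),
        (X - C ((qInt (Nat.card F) (finrank F V - k) : R) - (qInt (Nat.card F) k : R)))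
          ^ Nat.card {W : Submodule F V // finrank F W = k} := by
  have hzeta : IsUnit (relMatrix R (α := Submodule F V) (· ≤ ·)) :=
    (Matrix.isUnit_iff_isUnit_det _).2 (by rw [det_relMatrix_le]; exact isUnit_one)
  rw [charpoly_eq_of_mul_eq_mul hzeta (qAdjMatrix_mul_relMatrix_le R F V),
    charpoly_diagonal_add_relMatrix_covBy, ← prod_finrank_sub_finrank_eq_prod_pow fun k =>
      X - C ((qInt (Nat.card F) (finrank F V - k) : R) - (qInt (Nat.card F) k : R))]
  simp only [Nat.sub_sub_self (Submodule.finrank_le _)]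

end SubspaceMatrix

theorem Mq_eq_qAdjMatrix (F : Type) [Field F] [Fintype F] (n : ℕ) :
    Mq F n = qAdjMatrix ℂ F (Fin n → F) := by
  ext X Y
  have hYX : Y ⋖ X ↔ Y ≤ X ∧ finrank F Y + 1 = finrank F X := by
    rw [covBy_iff_le_and_finrank_eq, eq_comm]
  classical
  rw [qAdjMatrix, Matrix.of_apply, Nat.card_eq_fintype_card]
  exact if_congr hYX.symm rfl (if_congr covBy_iff_le_and_finrank_eq.symm rfl rfl)

open Polynomial in
/-- The characteristic polynomial of `M_q(n)` equals
`∏_{k=0}^n (x - ((n-k)_q - (k)_q))^{[n choose k]_q}`. -/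
theorem charpoly_Mq (F : Type) [Field F] [Fintype F] (n : ℕ) :
    letI := Classical.decEq (Submodule F (Fin n → F))
    (Mq F n).charpoly =
      ∏ k ∈ Finset.range (n + 1),
        (X - C ((qInt (Fintype.card F) (n - k) : ℂ) - (qInt (Fintype.card F) k : ℂ)))
          ^ (gaussBinom F n k) := by
  let := Classical.decEq (Submodule F (Fin n → F))
  simpa only [Mq_eq_qAdjMatrix, gaussBinom, Nat.card_eq_fintype_card (α := F), finrank_fin_fun]
    using charpoly_Mq_general ℂ F (Fin n → F)
end

section
/- Let χ : H(n+1, F_q) → ℂ* be a nontrivial (one-dimensional) character of the abelian group H(n+1, F_q), and let ψ_k be the permutation character of the action of H(n+1,F_q) on A_q(n+1,k). Then for 1 ≤ k ≤ n+1, the character inner product [χ, ψ_k] = (1/|H(n+1,F_q)|) ∑_{g} χ(g)^{−1} · |{X ∈ A_q(n+1,k) : gX = X}| equals the Gaussian binomial coefficient [n−1 choose k−1]_q (which is 0 when k = n+1). -/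
/-- The copy of `F^m` inside `F^n`: vectors whose coordinates of index `≥ m`
vanish. -/
def coordSpace (F : Type) [Field F] (n m : ℕ) : Submodule F (Fin n → F) where
  carrier := {v | ∀ i : Fin n, m ≤ (i : ℕ) → v i = 0}
  add_mem' := by
    intro a b ha hb i hi
    simp [ha i hi, hb i hi]
  zero_mem' := by intro i hi; rfl
  smul_mem' := by
    intro c v hv i hi
    simp [hv i hi]

/-- The element of the group `H(n+1, F_q)` with parameter `a ∈ F^n`. -/
def hmat (F : Type) [Field F] (n : ℕ) (a : Fin n → F) :
    Matrix (Fin (n + 1)) (Fin (n + 1)) F :=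
  fun i j =>
    if i = j then 1
    else if h : (i : ℕ) < n ∧ (j : ℕ) = n then a ⟨(i : ℕ), h.1⟩ else 0

/-!
The group acts by the transvections `x ↦ x + φ x • u`, where `φ` is the last coordinate and `u` runs
over `ker φ`. The stabilizer of a subspace `X ⊄ ker φ` is `X ∩ ker φ`, so by orthogonality of
characters `X` contributes `|X ∩ ker φ|` to the sum if `χ` is trivial on `X ∩ ker φ`, and `0`
otherwise. Triviality of `χ` on a subspace means that the subspace lies in the largest subspace `W`
on which `χ` is trivial; `W` is a hyperplane of `ker φ`, because `v ↦ (c ↦ χ (c • v))` maps `ker φ`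
to the characters of `F`, of which there are at most `|F|`. Finally `|X ∩ ker φ|` is the number of
`v ∈ X` with `φ v = 1`, and the `X` through such a `v` with `X ∩ ker φ ≤ W` correspond to the
`(k - 1)`-dimensional subspaces of `W`: count the pairs `(v, X)` in both orders.
-/

open Module Finset

section AddChar

variable {A R : Type*}

theorem linearIndependent_addChar [AddMonoid A] [CommRing R] [IsDomain R] :
    LinearIndependent R (fun ψ : AddChar A R ↦ (ψ : A → R)) :=
  (linearIndependent_monoidHom (Multiplicative A) R).comp _ AddChar.toMonoidHomEquiv.injective

instance finite_addChar [AddMonoid A] [Finite A] [CommRing R] [IsDomain R] :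
    Finite (AddChar A R) :=
  linearIndependent_addChar.finite

theorem natCard_addChar_le [AddMonoid A] [Finite A] [CommRing R] [IsDomain R] :
    Nat.card (AddChar A R) ≤ Nat.card A := by
  have := Fintype.ofFinite A
  have := Fintype.ofFinite (AddChar A R)
  simpa using (linearIndependent_addChar (A := A) (R := R)).fintype_card_le_finrank

open Classical in
theorem sum_inv_addChar_addSubgroup [AddCommGroup A] [Fintype A] [Field R] (χ : AddChar A R)
    (B : AddSubgroup A) :
    ∑ a with a ∈ B, (χ a)⁻¹ = if ∀ b ∈ B, χ b = 1 then (Nat.card B : R) else 0 := by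
  have htriv : χ⁻¹.compAddMonoidHom B.subtype = 0 ↔ ∀ b ∈ B, χ b = 1 := by
    simp [AddChar.eq_zero_iff, AddChar.inv_apply', -AddChar.inv_apply]
  have hsum := (χ⁻¹.compAddMonoidHom B.subtype).sum_eq_ite
  simp only [htriv, AddChar.compAddMonoidHom_apply, AddChar.inv_apply', AddSubgroup.coe_subtype,
    ← Nat.card_eq_fintype_card] at hsum
  rw [← hsum]
  exact sum_subtype _ (by simp) fun a ↦ (χ a)⁻¹

variable {F V : Type*} [Field F] [AddCommGroup V] [Module F V]

theorem natCast_card_ne_zero_of_addChar_ne_one [Fintype F] [CommRing R] [IsDomain R]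
    {χ : AddChar V R} (hχ : χ ≠ 1) : (Fintype.card F : R) ≠ 0 := by
  -- In characteristic `p` the values of `χ` are `p`-th roots of unity, hence all equal to `1`.
  intro hcard
  obtain ⟨m, hp, hm⟩ := FiniteField.card F (ringChar F)
  have hpR : (ringChar F : R) = 0 := by
    rw [hm, Nat.cast_pow] at hcard
    exact eq_zero_of_pow_eq_zero hcard
  have : Fact (ringChar F).Prime := ⟨hp⟩
  have : CharP R (ringChar F) := CharP.ringChar_of_prime_eq_zero hp hpR ▸ ringChar.charP R
  obtain ⟨v, hv⟩ := AddChar.ne_one_iff.1 hχ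
  have hpv : ringChar F • v = 0 := by
    rw [← Nat.cast_smul_eq_nsmul F, ringChar.Nat.cast_ringChar, zero_smul]
  refine hv (frobenius_inj R (ringChar F) ?_)
  rw [frobenius_def, ← AddChar.map_nsmul_eq_pow, hpv, AddChar.map_zero_eq_one, map_one]

/-- Restriction of `χ` to the lines of `V`: the vector `v` is sent to `c ↦ χ (c • v)`. -/
def lineChar (F : Type*) [Field F] [Module F V] [CommMonoid R] (χ : AddChar V R) :
    V →+ AddChar F R where
  toFun v := χ.compAddMonoidHom ((smulAddHom F V).flip v)
  map_zero' := by ext; simp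
  map_add' u v := by ext; simp [AddChar.map_add_eq_mul]

/-- The largest `F`-subspace of `V` on which `χ` is trivial. -/
def charKernel (F : Type*) [Field F] [Module F V] [CommMonoid R] (χ : AddChar V R) :
    Submodule F V where
  toAddSubmonoid := (lineChar F χ).ker.toAddSubmonoid
  smul_mem' d v hv := by
    ext c
    simpa [lineChar, smul_smul] using DFunLike.congr_fun hv (c * d)

theorem le_charKernel_iff [CommMonoid R] {χ : AddChar V R} {Y : Submodule F V} :
    Y ≤ charKernel F χ ↔ ∀ v ∈ Y, χ v = 1 := by
  refine ⟨fun h v hv ↦ ?_, fun h v hv ↦ ?_⟩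
  · simpa [lineChar] using DFunLike.congr_fun (h hv) (1 : F)
  · ext c
    exact h _ (Y.smul_mem c hv)

theorem finrank_charKernel_add_one [Finite F] [Finite V] [CommRing R] [IsDomain R]
    {χ : AddChar V R} (hχ : χ ≠ 1) :
    finrank F (charKernel F χ) + 1 = finrank F V := by
  have : Module.Finite F V := .of_finite
  obtain ⟨a, ha⟩ := AddChar.ne_one_iff.1 hχ
  have hlt : finrank F (charKernel F χ) < finrank F V :=
    Submodule.finrank_lt fun htop ↦ ha (le_charKernel_iff.1 htop.ge a trivial)
  have hindex : (lineChar F χ).ker.index ≤ Nat.card F := by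
    rw [AddSubgroup.index_ker]
    exact (Finite.card_subtype_le _).trans natCard_addChar_le
  have hle : Nat.card F ^ finrank F V ≤ Nat.card F ^ (finrank F (charKernel F χ) + 1) :=
    calc Nat.card F ^ finrank F V = Nat.card (charKernel F χ) * (lineChar F χ).ker.index := by
          rw [← natCard_eq_pow_finrank]
          exact (lineChar F χ).ker.card_mul_index.symm
      _ ≤ Nat.card F ^ (finrank F (charKernel F χ) + 1) := by
          rw [natCard_eq_pow_finrank (K := F), pow_succ]
          gcongr
  have := (Nat.pow_le_pow_iff_right Finite.one_lt_card).1 hle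
  omega

end AddChar

section GaussBinom

variable {F : Type} {V : Type*} [Field F] [Fintype F] [AddCommGroup V] [Module F V]
  [FiniteDimensional F V]

theorem natCard_submodule_finrank_eq (k : ℕ) :
    Nat.card {Y : Submodule F V // finrank F Y = k} = gaussBinom F (finrank F V) k :=
  Nat.card_congr <| (Submodule.orderIsoMapComap (finBasis F V).equivFun).toEquiv.subtypeEquiv
    fun Y ↦ (LinearEquiv.finrank_map_eq _ Y).symm.congr_left

theorem natCard_submodule_le_finrank_eq (W : Submodule F V) (k : ℕ) :
    Nat.card {Y : Submodule F V // Y ≤ W ∧ finrank F Y = k} = gaussBinom F (finrank F W) k := by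
  rw [← natCard_submodule_finrank_eq, ← Nat.card_congr (Equiv.subtypeSubtypeEquivSubtypeInter _ _)]
  exact Nat.card_congr <| (W.mapIic.toEquiv.subtypeEquiv
    fun Y ↦ (W.finrank_map_subtype_eq Y).symm.congr_left).symm

end GaussBinom

section Hyperplane

variable {F V : Type*} [Field F] [AddCommGroup V] [Module F V] {φ : Dual F V} {X : Submodule F V}

theorem exists_mem_apply_eq_one (hX : ¬ X ≤ φ.ker) : ∃ v ∈ X, φ v = 1 := by
  obtain ⟨x, hx, hφx⟩ := SetLike.not_le_iff_exists.1 hX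
  exact ⟨(φ x)⁻¹ • x, X.smul_mem _ hx, by simpa using inv_mul_cancel₀ hφx⟩

theorem map_transvection_eq_iff_mem (hX : ¬ X ≤ φ.ker) (u : φ.ker) :
    X.map (LinearMap.transvection φ u) = X ↔ u ∈ X.submoduleOf φ.ker := by
  have hu : φ u = 0 := u.2
  change _ ↔ (u : V) ∈ X
  refine ⟨fun h ↦ ?_, fun h ↦ le_antisymm ?_ fun x hx ↦ ?_⟩
  · obtain ⟨v, hv, hφv⟩ := exists_mem_apply_eq_one hX
    have hvu : v + u ∈ X := by
      have := Submodule.mem_map_of_mem (f := LinearMap.transvection φ u) hv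
      rwa [h, LinearMap.transvection.apply, hφv, one_smul] at this
    exact (X.add_mem_iff_right hv).1 hvu
  · rintro _ ⟨x, hx, rfl⟩
    exact X.add_mem hx (X.smul_mem _ h)
  · exact ⟨x - φ x • u, X.sub_mem hx (X.smul_mem _ h), by simp [LinearMap.transvection.apply, hu]⟩

theorem finrank_submoduleOf_ker_add_one [FiniteDimensional F X] (hX : ¬ X ≤ φ.ker) :
    finrank F (X.submoduleOf φ.ker) + 1 = finrank F X := by
  have hne : φ.domRestrict X ≠ 0 := by
    obtain ⟨v, hv, hφv⟩ := exists_mem_apply_eq_one hX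
    exact fun h ↦ by simpa [hφv] using LinearMap.congr_fun h ⟨v, hv⟩
  rw [← Dual.finrank_ker_add_one_of_ne_zero hne, ← Submodule.finrank_map_subtype_eq φ.ker,
    ← Submodule.finrank_map_subtype_eq X, LinearMap.ker_domRestrict, Submodule.submoduleOf,
    Submodule.map_comap_subtype, Submodule.map_comap_subtype, inf_comm]

theorem natCard_mem_apply_eq_one (hX : ¬ X ≤ φ.ker) :
    Nat.card {v // v ∈ X ∧ φ v = 1} = Nat.card (X.submoduleOf φ.ker) := by
  obtain ⟨v₀, hv₀, hφv₀⟩ := exists_mem_apply_eq_one hX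
  exact Nat.card_congr
    { toFun v := ⟨⟨v - v₀, by simp [v.2.2, hφv₀]⟩, X.sub_mem v.2.1 hv₀⟩
      invFun u := ⟨u + v₀, X.add_mem u.2 hv₀, by simp [hφv₀]⟩
      left_inv v := by simp
      right_inv u := by simp }

theorem natCard_apply_eq_one (hφ : φ ≠ 0) : Nat.card {v // φ v = 1} = Nat.card φ.ker := by
  have htop : ¬ ⊤ ≤ φ.ker := by rwa [top_le_iff, LinearMap.ker_eq_top]
  simpa [Submodule.submoduleOf_eq_top.2, Nat.card_congr Submodule.topEquiv.toEquiv]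
    using natCard_mem_apply_eq_one htop

/-- The projection onto the hyperplane `ker φ` along a vector `v` with `φ v = 1`. -/
def kerProj {v : V} (hv : φ v = 1) : V →ₗ[F] φ.ker :=
  (LinearMap.id - φ.smulRight v).codRestrict φ.ker fun x ↦ by simp [hv]

theorem coe_kerProj_apply {v : V} (hv : φ v = 1) (x : V) : (kerProj hv x : V) = x - φ x • v := rfl

/-- Intersecting with `ker φ` identifies the subspaces through a point `v` off `ker φ` with the
subspaces of `ker φ`. -/
def subspacesThroughEquiv {v : V} (hv : φ v = 1) :
    {X : Submodule F V // v ∈ X} ≃ Submodule F φ.ker where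
  toFun X := X.1.submoduleOf φ.ker
  invFun Y := ⟨Y.comap (kerProj hv), by
    have : kerProj hv v = 0 := Subtype.ext <| by simp [coe_kerProj_apply, hv]
    simp [this]⟩
  left_inv X := by
    ext x
    simpa [Submodule.submoduleOf, coe_kerProj_apply] using
      X.1.sub_mem_iff_left (X.1.smul_mem (φ x) X.2)
  right_inv Y := by
    ext u
    have : kerProj hv u = u := Subtype.ext <| by simp [coe_kerProj_apply]
    simp [Submodule.submoduleOf, this]

end Hyperplane

section PermutationCharacter

variable {F V : Type*} [Field F] [AddCommGroup V] [Module F V] [Finite V]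

/-- The set `A_q(n+1, k)`, relative to the hyperplane `ker φ` instead of `F^n`: the `k`-dimensional
subspaces that are not contained in `ker φ`. -/
noncomputable def subspacesOff (φ : Dual F V) (k : ℕ) : Finset (Submodule F V) :=
  (Set.toFinite {X | ¬ X ≤ φ.ker ∧ finrank F X = k}).toFinset

variable {φ : Dual F V} {k : ℕ}

@[simp]
theorem mem_subspacesOff {X : Submodule F V} :
    X ∈ subspacesOff φ k ↔ ¬ X ≤ φ.ker ∧ finrank F X = k := by
  simp [subspacesOff]

open Classical in
theorem natCard_fixed_subspacesOff (u : φ.ker) :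
    Nat.card {X // (¬ X ≤ φ.ker ∧ finrank F X = k) ∧ X.map (LinearMap.transvection φ u) = X} =
      #{X ∈ subspacesOff φ k | u ∈ X.submoduleOf φ.ker} := by
  refine Nat.subtype_card _ fun X ↦ ?_
  rw [mem_filter, mem_subspacesOff]
  exact and_congr_right fun h ↦ (map_transvection_eq_iff_mem h.1 u).symm

open Classical in
theorem sum_inv_addChar_mul_natCard_fixed {R : Type*} [Field R] [Fintype φ.ker]
    (χ : AddChar φ.ker R) :
    ∑ u, (χ u)⁻¹ * (Nat.card {X // (¬ X ≤ φ.ker ∧ finrank F X = k) ∧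
        X.map (LinearMap.transvection φ u) = X} : R) =
      ∑ X ∈ subspacesOff φ k with X.submoduleOf φ.ker ≤ charKernel F χ,
        (Nat.card (X.submoduleOf φ.ker) : R) := by
  have hstab (X : Submodule F V) : ∑ u with u ∈ X.submoduleOf φ.ker, (χ u)⁻¹ =
      if X.submoduleOf φ.ker ≤ charKernel F χ then (Nat.card (X.submoduleOf φ.ker) : R) else 0 := by
    simp only [le_charKernel_iff]
    exact sum_inv_addChar_addSubgroup χ (X.submoduleOf φ.ker).toAddSubgroup
  calc ∑ u, (χ u)⁻¹ * (Nat.card {X // (¬ X ≤ φ.ker ∧ finrank F X = k) ∧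
          X.map (LinearMap.transvection φ u) = X} : R)
      = ∑ u, ∑ X ∈ subspacesOff φ k with u ∈ X.submoduleOf φ.ker, (χ u)⁻¹ := by
        simp only [natCard_fixed_subspacesOff, sum_const, nsmul_eq_mul, mul_comm]
    _ = ∑ X ∈ subspacesOff φ k, ∑ u with u ∈ X.submoduleOf φ.ker, (χ u)⁻¹ :=
        sum_comm' (by simp [and_comm])
    _ = ∑ X ∈ subspacesOff φ k with X.submoduleOf φ.ker ≤ charKernel F χ,
          (Nat.card (X.submoduleOf φ.ker) : R) := by
        simp only [hstab, sum_filter]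

end PermutationCharacter

section DoubleCounting

variable {F : Type} {V : Type*} [Field F] [Fintype F] [AddCommGroup V] [Module F V] {φ : Dual F V}

theorem natCard_subspaces_through [FiniteDimensional F V] {v : V} (hv : φ v = 1)
    (W : Submodule F φ.ker) (k : ℕ) :
    Nat.card {X : Submodule F V // v ∈ X ∧ X.submoduleOf φ.ker ≤ W ∧ finrank F X = k + 1} =
      gaussBinom F (finrank F W) k := by
  rw [← natCard_submodule_le_finrank_eq,
    ← Nat.card_congr (Equiv.subtypeSubtypeEquivSubtypeInter _ _)]
  refine Nat.card_congr <| (subspacesThroughEquiv hv).subtypeEquiv fun X ↦ and_congr_right' ?_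
  have hX : ¬ X.1 ≤ φ.ker := fun h ↦ by simpa [hv] using h X.2
  rw [← finrank_submoduleOf_ker_add_one hX, Nat.add_right_cancel_iff]
  rfl

open Classical in
theorem sum_natCard_submoduleOf_ker [Finite V] (hφ : φ ≠ 0) (W : Submodule F φ.ker) (k : ℕ) :
    ∑ X ∈ subspacesOff φ (k + 1) with X.submoduleOf φ.ker ≤ W, Nat.card (X.submoduleOf φ.ker) =
      Nat.card φ.ker * gaussBinom F (finrank F W) k := by
  have := Fintype.ofFinite V
  let S : Finset (Submodule F V) := {X ∈ subspacesOff φ (k + 1) | X.submoduleOf φ.ker ≤ W}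
  let T : Finset V := {v | φ v = 1}
  have hpoints : ∀ X ∈ S, Nat.card (X.submoduleOf φ.ker) = #{v ∈ T | v ∈ X} := by
    intro X hX
    rw [← natCard_mem_apply_eq_one (mem_subspacesOff.1 (mem_filter.1 hX).1).1]
    exact Nat.subtype_card _ (by simp [T, and_comm])
  have hsubspaces : ∀ v ∈ T, #{X ∈ S | v ∈ X} = gaussBinom F (finrank F W) k := by
    intro v hv
    have hφv : φ v = 1 := (mem_filter.1 hv).2
    rw [← natCard_subspaces_through hφv]
    refine (Nat.subtype_card _ fun X ↦ ?_).symm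
    have hX : v ∈ X → ¬ X ≤ φ.ker := fun hvX h ↦ by simpa [hφv] using h hvX
    simp only [S, mem_filter, mem_subspacesOff]
    tauto
  have hT : #T = Nat.card φ.ker := by
    rw [← natCard_apply_eq_one hφ]
    exact (Nat.subtype_card _ (by simp [T])).symm
  calc ∑ X ∈ S, Nat.card (X.submoduleOf φ.ker)
      = ∑ X ∈ S, #{v ∈ T | v ∈ X} := sum_congr rfl hpoints
    _ = ∑ v ∈ T, #{X ∈ S | v ∈ X} :=
        sum_card_bipartiteAbove_eq_sum_card_bipartiteBelow fun X v ↦ v ∈ X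
    _ = Nat.card φ.ker * gaussBinom F (finrank F W) k := by
        rw [sum_congr rfl hsubspaces, sum_const, hT, smul_eq_mul]

theorem sum_inv_addChar_mul_natCard_fixed_of_ne_one {R : Type*} [Field R] [Finite V]
    [Fintype φ.ker] (hφ : φ ≠ 0) {χ : AddChar φ.ker R} (hχ : χ ≠ 1) (k : ℕ) :
    ∑ u, (χ u)⁻¹ * (Nat.card {X // (¬ X ≤ φ.ker ∧ finrank F X = k + 1) ∧
        X.map (LinearMap.transvection φ u) = X} : R) =
      Nat.card φ.ker * gaussBinom F (finrank F φ.ker - 1) k := by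
  classical
  rw [sum_inv_addChar_mul_natCard_fixed, ← Nat.cast_sum, sum_natCard_submoduleOf_ker hφ,
    Nat.eq_sub_of_add_eq (finrank_charKernel_add_one hχ), Nat.cast_mul]

end DoubleCounting

section Coordinates

variable {F : Type*} [Field F] {n : ℕ}

/-- The last coordinate functional on `F^(n+1)`, whose kernel is the copy of `F^n`. -/
def lastCoord (F : Type*) [Field F] (n : ℕ) : Dual F (Fin (n + 1) → F) :=
  LinearMap.proj (Fin.last n)

@[simp]
theorem lastCoord_apply (x : Fin (n + 1) → F) : lastCoord F n x = x (Fin.last n) := rfl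

theorem lastCoord_ne_zero : lastCoord F n ≠ 0 := fun h ↦ by
  simpa using LinearMap.congr_fun h (Pi.single (Fin.last n) 1)

theorem coordSpace_eq_ker_lastCoord {F : Type} [Field F] {n : ℕ} :
    coordSpace F (n + 1) n = (lastCoord F n).ker := by
  ext x
  refine ⟨fun h ↦ h _ le_rfl, fun h i hi ↦ ?_⟩
  rwa [Fin.last_le_iff.1 hi]

/-- The identification of `F^n` with the hyperplane `ker (lastCoord F n)` that appends a zero
coordinate. -/
def snocZeroEquiv (F : Type*) [Field F] (n : ℕ) : (Fin n → F) ≃ₗ[F] (lastCoord F n).ker where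
  toFun a := ⟨Fin.snoc (α := fun _ ↦ F) a 0,
    LinearMap.mem_ker.2 <| Fin.snoc_last (α := fun _ ↦ F) _ _⟩
  invFun x := Fin.init (α := fun _ ↦ F) x
  map_add' a b := by ext i; cases i using Fin.lastCases <;> simp
  map_smul' c a := by ext i; cases i using Fin.lastCases <;> simp
  left_inv a := by simp
  right_inv x := Subtype.ext <| by
    have hx : (x : Fin (n + 1) → F) (Fin.last n) = 0 := x.2
    simpa only [hx] using Fin.snoc_init_self (α := fun _ ↦ F) (x : Fin (n + 1) → F)

theorem mulVecLin_hmat {F : Type} [Field F] {n : ℕ} (a : Fin n → F) :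
    (hmat F n a).mulVecLin = LinearMap.transvection (lastCoord F n) (snocZeroEquiv F n a) := by
  refine LinearMap.ext fun x ↦ funext fun i ↦ ?_
  rw [Matrix.mulVecLin_apply, Matrix.mulVec, dotProduct, Fin.sum_univ_castSucc]
  cases i using Fin.lastCases with
  | last => simp [hmat, snocZeroEquiv, LinearMap.transvection.apply, (Fin.castSucc_ne_last _).symm]
  | cast i =>
    simp [hmat, snocZeroEquiv, LinearMap.transvection.apply, (Fin.is_lt _).ne, mul_comm]

end Coordinates

theorem char_inner_product_general {F : Type} [Field F] [Fintype F] {R : Type*} [Field R] {n : ℕ}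
    {χ : AddChar (Fin n → F) R} (hχ : χ ≠ 1) {k : ℕ} (hk : 1 ≤ k) :
    (1 / (Fintype.card F : R) ^ n) *
      ∑ a : Fin n → F, (χ a)⁻¹ *
        (Nat.card {X : Submodule F (Fin (n + 1) → F) //
          (¬ X ≤ coordSpace F (n + 1) n ∧ finrank F X = k) ∧
            Submodule.map (Matrix.mulVecLin (hmat F n a)) X = X} : R) =
      (gaussBinom F (n - 1) (k - 1) : R) := by
  obtain ⟨k, rfl⟩ := Nat.exists_eq_add_of_le' hk
  let e := snocZeroEquiv F n
  have := Fintype.ofFinite (lastCoord F n).ker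
  have hχ' : χ.compAddMonoidHom e.symm.toAddEquiv.toAddMonoidHom ≠ 1 := by
    obtain ⟨a, ha⟩ := AddChar.ne_one_iff.1 hχ
    exact AddChar.ne_one_iff.2 ⟨e a, by simpa using ha⟩
  have hsum : ∑ a, (χ a)⁻¹ * (Nat.card {X // (¬ X ≤ (lastCoord F n).ker ∧ finrank F X = k + 1) ∧
      X.map (LinearMap.transvection (lastCoord F n) (e a)) = X} : R) =
        Fintype.card F ^ n * gaussBinom F (n - 1) k := by
    have h := sum_inv_addChar_mul_natCard_fixed_of_ne_one lastCoord_ne_zero hχ' k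
    rw [← e.toEquiv.sum_comp, ← e.finrank_eq, ← Nat.card_congr e.toEquiv] at h
    simpa using h
  have hq := natCast_card_ne_zero_of_addChar_ne_one (F := F) hχ
  simp only [coordSpace_eq_ker_lastCoord, mulVecLin_hmat]
  rw [hsum, one_div, inv_mul_cancel_left₀ (pow_ne_zero n hq), Nat.add_sub_cancel]

/-- For a nontrivial character `χ` of `H(n+1, F_q) ≅ (F^n, +)` and `1 ≤ k ≤ n+1`,
the inner product of `χ` with the permutation character of `H(n+1, F_q)` acting on
`A_q(n+1, k)` equals `[n−1 choose k−1]_q`. -/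
theorem char_inner_product (F : Type) [Field F] [Fintype F] (n : ℕ)
    (χ : (Fin n → F) → ℂ) (hhom : ∀ a b, χ (a + b) = χ a * χ b)
    (h0 : χ 0 = 1) (hnt : ∃ a, χ a ≠ 1) (k : ℕ) (hk : 1 ≤ k) (hk' : k ≤ n + 1) :
    (1 / (Fintype.card F : ℂ) ^ n) *
      ∑ a : Fin n → F, (χ a)⁻¹ *
        (Nat.card {X : Submodule F (Fin (n + 1) → F) //
          (¬ X ≤ coordSpace F (n + 1) n ∧ Module.finrank F X = k) ∧
            Submodule.map (Matrix.mulVecLin (hmat F n a)) X = X} : ℂ) =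
      (gaussBinom F (n - 1) (k - 1) : ℂ) :=
  char_inner_product_general (χ := ⟨χ, h0, hhom⟩) (AddChar.ne_one_iff.2 hnt) hk
end
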